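/- Let a, b, c, d be real numbers with 0 < a < b, c < 1, d > b, and 1 + d − b − c > 0. Then ₃F₂(a, b, c; a+1, d; 1) = [Γ(1-c)Γ(d)Γ(a+1)Γ(b-a) / (Γ(b)Γ(d-a)Γ(a-c+1))] − [a·Γ(1-c)Γ(d) / (Γ(b-c+1)Γ(d-b)(b-a))] · ₃F₂(b, b-d+1, b-a; b-a+1, b-c+1; 1). -/

import Mathlib

open Real MeasureTheory

/-- Pochhammer symbol `(a)_k = a (a+1) ⋯ (a+k-1)` for real `a`. -/
noncomputable def poch (a : ℝ) (k : ℕ) : ℝ := (ascPochhammer ℝ k).eval a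

/-- Gaussian hypergeometric function `₂F₁(a,b;c;z)`. -/
noncomputable def hyp2F1 (a b c z : ℝ) : ℝ :=
  ∑' k : ℕ, (poch a k * poch b k) / poch c k * z ^ k / (Nat.factorial k)

/-- Generalized hypergeometric function `₃F₂(a₁,a₂,a₃;b₁,b₂;z)`. -/
noncomputable def hyp3F2 (a₁ a₂ a₃ b₁ b₂ z : ℝ) : ℝ :=
  ∑' k : ℕ, (poch a₁ k * poch a₂ k * poch a₃ k) / (poch b₁ k * poch b₂ k) * z ^ k /
    (Nat.factorial k)

/-- Generalized hypergeometric function `₄F₃(a₁,a₂,a₃,a₄;b₁,b₂,b₃;z)`. -/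
noncomputable def hyp4F3 (a₁ a₂ a₃ a₄ b₁ b₂ b₃ z : ℝ) : ℝ :=
  ∑' k : ℕ, (poch a₁ k * poch a₂ k * poch a₃ k * poch a₄ k) /
    (poch b₁ k * poch b₂ k * poch b₃ k) * z ^ k / (Nat.factorial k)

/-!
Write `B_t(u, v) = ∫₀ᵗ x^(u-1) (1-x)^(v-1) dx`. Expanding `(1-x)^(v-1)` as a binomial series and
integrating termwise twice gives, for `0 < a < b < d` and `c < 1`,
`₃F₂(a, b, c; a+1, d; 1) = a / B(b, d-b) * ∫₀¹ B_t(a, 1-c) dB_t(b-a, d-b)`.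
The series on the right-hand side of the transformation is the same integral with the two
incomplete beta functions exchanged, so the identity is integration by parts.
-/

open Set Filter ProbabilityTheory
open scoped Nat

section Pochhammer

lemma poch_succ (a : ℝ) (k : ℕ) : poch a (k + 1) = poch a k * (a + k) :=
  ascPochhammer_succ_eval k a

lemma poch_mul_add_natCast (a : ℝ) (k : ℕ) : poch a k * (a + k) = a * poch (a + 1) k := by
  rw [← poch_succ, poch, poch, ascPochhammer_succ_left]
  simp

lemma poch_pos {a : ℝ} (ha : 0 < a) (k : ℕ) : 0 < poch a k :=
  ascPochhammer_pos k a ha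

lemma Gamma_add_natCast {a : ℝ} (ha : ∀ m : ℕ, a ≠ -m) (k : ℕ) :
    Gamma (a + k) = poch a k * Gamma a := by
  induction k with
  | zero => simp [poch]
  | succ k ih =>
    have hak : a + k ≠ 0 := fun h => ha k (eq_neg_of_add_eq_zero_left h)
    rw [Nat.cast_succ, ← add_assoc, Gamma_add_one hak, ih, poch_succ]
    ring

lemma beta_add_natCast {u v : ℝ} (hu : ∀ m : ℕ, u ≠ -m) (huv : ∀ m : ℕ, u + v ≠ -m) (k : ℕ) :
    beta (u + k) v = poch u k / poch (u + v) k * beta u v := by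
  rw [beta, beta, add_right_comm, Gamma_add_natCast hu, Gamma_add_natCast huv]
  ring

lemma eventually_poch_nonneg_or_nonpos (c : ℝ) :
    (∀ᶠ k in atTop, 0 ≤ poch c k) ∨ ∀ᶠ k in atTop, poch c k ≤ 0 := by
  obtain ⟨N, hN⟩ := exists_nat_ge (-c)
  have factor_nonneg {k : ℕ} (hk : N ≤ k) : 0 ≤ c + k := by
    have : (N : ℝ) ≤ k := mod_cast hk
    linarith
  refine (le_total 0 (poch c N)).imp (fun h => ?_) (fun h => ?_)
  · refine eventually_atTop.2 ⟨N, Nat.le_induction h fun k hk ih => ?_⟩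
    rw [poch_succ]
    exact mul_nonneg ih (factor_nonneg hk)
  · refine eventually_atTop.2 ⟨N, Nat.le_induction h fun k hk ih => ?_⟩
    rw [poch_succ]
    exact mul_nonpos_of_nonpos_of_nonneg ih (factor_nonneg hk)

lemma eventually_poch_div_factorial_nonneg_or_nonpos (c : ℝ) :
    (∀ᶠ k : ℕ in atTop, 0 ≤ poch c k / k !) ∨ ∀ᶠ k : ℕ in atTop, poch c k / k ! ≤ 0 :=
  (eventually_poch_nonneg_or_nonpos c).imp
    (fun h => h.mono fun k hk => div_nonneg hk (k !).cast_nonneg)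
    (fun h => h.mono fun k hk => div_nonpos_of_nonpos_of_nonneg hk (k !).cast_nonneg)

lemma hasSum_poch_div_factorial_mul_pow (c : ℝ) {x : ℝ} (hx : |x| < 1) :
    HasSum (fun k : ℕ => poch c k / k ! * x ^ k) ((1 - x) ^ (-c)) := by
  have coeff_eq (k : ℕ) : Ring.choose (c + k - 1) k = poch c k / k ! := by
    rw [← Ring.multichoose_eq, eq_div_iff (by positivity), mul_comm, ← nsmul_eq_mul,
      Ring.factorial_nsmul_multichoose_eq_ascPochhammer, Polynomial.ascPochhammer_smeval_eq_eval,
      poch]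
  have h := (one_div_one_sub_rpow_hasFPowerSeriesOnBall_zero c).hasSum (y := x)
    (by simpa [enorm_eq_ofReal_abs] using hx)
  simpa [FormalMultilinearSeries.ofScalars_apply_eq, coeff_eq, mul_comm,
    rpow_neg (sub_nonneg.2 (lt_of_abs_lt hx).le)] using h

end Pochhammer

section TermwiseIntegration

variable {α : Type*} [MeasurableSpace α] {μ : Measure α} {f : α → ℝ}

lemma hasSum_integral_of_eventually_nonneg {F : ℕ → α → ℝ} (hF : ∀ k, Integrable (F k) μ)
    (hf : Integrable f μ) (hsum : ∀ᵐ x ∂μ, HasSum (fun k => F k x) (f x))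
    (hnonneg : ∀ᶠ k in atTop, ∀ᵐ x ∂μ, 0 ≤ F k x) :
    HasSum (fun k => ∫ x, F k x ∂μ) (∫ x, f x ∂μ) := by
  obtain ⟨N, hN⟩ := eventually_atTop.1 hnonneg
  have hasSum_abs : ∀ᵐ x ∂μ, HasSum (fun k => |F k x|)
      (f x + ∑ k ∈ Finset.range N, (|F k x| - F k x)) := by
    have tail_nonneg : ∀ᵐ x ∂μ, ∀ k, N ≤ k → 0 ≤ F k x := by
      simpa only [ae_all_iff] using hN
    filter_upwards [hsum, tail_nonneg] with x hx hx_nonneg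
    have correction : HasSum (fun k => |F k x| - F k x)
        (∑ k ∈ Finset.range N, (|F k x| - F k x)) :=
      hasSum_sum_of_ne_finset_zero fun k hk => by
        rw [abs_of_nonneg (hx_nonneg k (by simpa using hk)), sub_self]
    simpa using hx.add correction
  refine hasSum_integral_of_dominated_convergence (fun k x => |F k x|)
    (fun k => (hF k).aestronglyMeasurable) (fun k => ae_of_all _ fun x => le_rfl)
    (hasSum_abs.mono fun x hx => hx.summable) ?_ hsum
  have integrable_bound :
      Integrable (fun x => f x + ∑ k ∈ Finset.range N, (|F k x| - F k x)) μ :=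
    hf.add (integrable_finsetSum _ fun k _ => (hF k).abs.sub (hF k))
  exact integrable_bound.congr (hasSum_abs.mono fun x hx => hx.tsum_eq.symm)

lemma hasSum_mul_integral_of_eventually_nonneg_or_nonpos {u : ℕ → ℝ} {g : ℕ → α → ℝ}
    (hu : (∀ᶠ k in atTop, 0 ≤ u k) ∨ ∀ᶠ k in atTop, u k ≤ 0)
    (hg : ∀ k, Integrable (g k) μ) (hg_nonneg : ∀ k, 0 ≤ᵐ[μ] g k) (hf : Integrable f μ)
    (hsum : ∀ᵐ x ∂μ, HasSum (fun k => u k * g k x) (f x)) :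
    HasSum (fun k => u k * ∫ x, g k x ∂μ) (∫ x, f x ∂μ) := by
  simp only [← integral_const_mul]
  rcases hu with hu | hu
  · refine hasSum_integral_of_eventually_nonneg (fun k => (hg k).const_mul _) hf hsum ?_
    filter_upwards [hu] with k hk
    filter_upwards [hg_nonneg k] with x hx using mul_nonneg hk hx
  · have hneg := hasSum_integral_of_eventually_nonneg (fun k => ((hg k).const_mul (u k)).neg)
      hf.neg (hsum.mono fun x hx => hx.neg) ?_
    · simpa [integral_neg] using hneg.neg
    filter_upwards [hu] with k hk
    filter_upwards [hg_nonneg k] with x hx using neg_nonneg.2 (mul_nonpos_of_nonpos_of_nonneg hk hx)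

end TermwiseIntegration

section IncompleteBeta

/-- The integrand `x ^ (u - 1) * (1 - x) ^ (v - 1)` of Euler's beta integral. It is only meaningful
for `0 < x < 1`: outside this range `Real.rpow` takes conventional values. -/
noncomputable def betaIntegrand (u v x : ℝ) : ℝ := x ^ (u - 1) * (1 - x) ^ (v - 1)

/-- The (non-regularized) incomplete beta function `B_t(u, v)`, for `0 ≤ t ≤ 1`. -/
noncomputable def incompleteBeta (u v t : ℝ) : ℝ := ∫ x in 0..t, betaIntegrand u v x

variable {u v : ℝ}

lemma measurable_betaIntegrand : Measurable (betaIntegrand u v) := by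
  unfold betaIntegrand
  fun_prop

lemma betaIntegrand_nonneg {x : ℝ} (hx : x ∈ Icc (0 : ℝ) 1) : 0 ≤ betaIntegrand u v x :=
  mul_nonneg (rpow_nonneg hx.1 _) (rpow_nonneg (sub_nonneg.2 hx.2) _)

lemma continuousAt_betaIntegrand {x : ℝ} (hx : x ∈ Ioo (0 : ℝ) 1) :
    ContinuousAt (betaIntegrand u v) x :=
  (continuousAt_id.rpow_const (Or.inl hx.1.ne')).mul
    ((continuousAt_const.sub continuousAt_id).rpow_const (Or.inl (sub_pos.2 hx.2).ne'))

lemma betaIntegrand_mul_rpow (s : ℝ) {x : ℝ} (hx : 0 < x) :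
    betaIntegrand u v x * x ^ s = betaIntegrand (u + s) v x := by
  rw [betaIntegrand, betaIntegrand, add_sub_right_comm, rpow_add hx]
  ring

lemma ofReal_betaIntegrand {x : ℝ} (hx : x ∈ Icc (0 : ℝ) 1) :
    (betaIntegrand u v x : ℂ) = (x : ℂ) ^ (u - 1 : ℂ) * (1 - x : ℂ) ^ (v - 1 : ℂ) := by
  rw [betaIntegrand, Complex.ofReal_mul, Complex.ofReal_cpow hx.1,
    Complex.ofReal_cpow (sub_nonneg.2 hx.2)]
  push_cast
  rfl

lemma hasSum_betaIntegrand {x : ℝ} (hx : x ∈ Ioo (0 : ℝ) 1) :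
    HasSum (fun k : ℕ => poch (1 - v) k / k ! * x ^ (u + k - 1)) (betaIntegrand u v x) := by
  have h := (hasSum_poch_div_factorial_mul_pow (1 - v)
    (abs_lt.2 ⟨by linarith [hx.1], hx.2⟩)).mul_left (x ^ (u - 1))
  rw [neg_sub] at h
  refine h.congr_fun fun k => ?_
  rw [add_sub_right_comm, rpow_add_natCast hx.1.ne']
  ring

lemma intervalIntegrable_betaIntegrand (hu : 0 < u) (hv : 0 < v) :
    IntervalIntegrable (betaIntegrand u v) volume 0 1 := by
  have h := Complex.betaIntegral_convergent (u := u) (v := v) (by simpa) (by simpa)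
  rw [intervalIntegrable_iff_integrableOn_Ioc_of_le zero_le_one] at h ⊢
  refine IntegrableOn.congr_fun h.re (fun x hx => ?_) measurableSet_Ioc
  simp only [← ofReal_betaIntegrand (Ioc_subset_Icc_self hx)]
  exact Complex.ofReal_re _

lemma incompleteBeta_zero : incompleteBeta u v 0 = 0 :=
  intervalIntegral.integral_same

lemma incompleteBeta_one (hu : 0 < u) (hv : 0 < v) : incompleteBeta u v 1 = beta u v := by
  rw [beta_eq_betaIntegralReal u v hu hv, ← Complex.ofReal_re (incompleteBeta u v 1),
    incompleteBeta, Complex.betaIntegral, ← intervalIntegral.integral_ofReal]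
  congr 1
  refine intervalIntegral.integral_congr fun x hx => ?_
  rw [uIcc_of_le zero_le_one] at hx
  exact ofReal_betaIntegrand hx

lemma continuousOn_incompleteBeta (hu : 0 < u) (hv : 0 < v) :
    ContinuousOn (incompleteBeta u v) (uIcc 0 1) :=
  intervalIntegral.continuousOn_primitive_interval' (intervalIntegrable_betaIntegrand hu hv)
    left_mem_uIcc

lemma hasDerivAt_incompleteBeta (hu : 0 < u) (hv : 0 < v) {t : ℝ} (ht : t ∈ Ioo (0 : ℝ) 1) :
    HasDerivAt (incompleteBeta u v) (betaIntegrand u v t) t :=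
  intervalIntegral.integral_hasDerivAt_right
    ((intervalIntegrable_betaIntegrand hu hv).mono_set
      (uIcc_subset_uIcc_left (by simpa [uIcc_of_le] using Ioo_subset_Icc_self ht)))
    measurable_betaIntegrand.stronglyMeasurable.stronglyMeasurableAtFilter
    (continuousAt_betaIntegrand ht)

lemma hasSum_incompleteBeta (hu : 0 < u) (hv : 0 < v) {t : ℝ} (ht : t ∈ Icc (0 : ℝ) 1) :
    HasSum (fun k : ℕ => poch (1 - v) k / k ! * (t ^ (u + k) / (u + k)))
      (incompleteBeta u v t) := by
  have exponent_pos (k : ℕ) : 0 < u + k := by positivity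
  have integral_power (k : ℕ) : ∫ x in 0..t, x ^ (u + k - 1) = t ^ (u + k) / (u + k) := by
    rw [integral_rpow (Or.inl (by linarith [exponent_pos k])), sub_add_cancel,
      zero_rpow (exponent_pos k).ne', sub_zero]
  simp only [← integral_power, incompleteBeta, intervalIntegral.integral_of_le ht.1]
  have mem_Ioo : ∀ᵐ x ∂volume.restrict (Ioc 0 t), x ∈ Ioo (0 : ℝ) 1 := by
    filter_upwards [ae_restrict_mem measurableSet_Ioc, Measure.ae_ne _ 1] with x hx hx_ne
    exact ⟨hx.1, (hx.2.trans ht.2).lt_of_ne hx_ne⟩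
  refine hasSum_mul_integral_of_eventually_nonneg_or_nonpos
    (eventually_poch_div_factorial_nonneg_or_nonpos (1 - v)) (fun k => ?_) (fun k => ?_) ?_ ?_
  · exact (intervalIntegral.intervalIntegrable_rpow' (by linarith [exponent_pos k])).1
  · exact mem_Ioo.mono fun x hx => rpow_nonneg hx.1.le _
  · exact (intervalIntegrable_betaIntegrand hu hv).1.mono_set (Ioc_subset_Ioc_right ht.2)
  · exact mem_Ioo.mono fun x hx => hasSum_betaIntegrand hx

variable {p q : ℝ}

lemma intervalIntegrable_betaIntegrand_mul_incompleteBeta (hu : 0 < u) (hv : 0 < v)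
    (hp : 0 < p) (hq : 0 < q) :
    IntervalIntegrable (fun t => betaIntegrand p q t * incompleteBeta u v t) volume 0 1 :=
  (intervalIntegrable_betaIntegrand hp hq).mul_continuousOn (continuousOn_incompleteBeta hu hv)

lemma integral_betaIntegrand_mul_incompleteBeta_add (hu : 0 < u) (hv : 0 < v)
    (hp : 0 < p) (hq : 0 < q) :
    (∫ t in 0..1, betaIntegrand p q t * incompleteBeta u v t) +
      ∫ t in 0..1, betaIntegrand u v t * incompleteBeta p q t = beta p q * beta u v := by
  have by_parts := intervalIntegral.integral_mul_deriv_eq_deriv_mul_of_hasDerivAt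
    (continuousOn_incompleteBeta hu hv) (continuousOn_incompleteBeta hp hq)
    (fun t ht => hasDerivAt_incompleteBeta hu hv (by simpa using ht))
    (fun t ht => hasDerivAt_incompleteBeta hp hq (by simpa using ht))
    (intervalIntegrable_betaIntegrand hu hv) (intervalIntegrable_betaIntegrand hp hq)
  simp only [mul_comm (incompleteBeta u v _) (betaIntegrand p q _)] at by_parts
  rw [by_parts, incompleteBeta_one hu hv, incompleteBeta_one hp hq, incompleteBeta_zero]
  ring

lemma hasSum_integral_betaIntegrand_mul_incompleteBeta (hu : 0 < u) (hv : 0 < v)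
    (hp : 0 < p) (hq : 0 < q) :
    HasSum (fun k : ℕ => poch (1 - v) k / k ! * (beta (p + u + k) q / (u + k)))
      (∫ t in 0..1, betaIntegrand p q t * incompleteBeta u v t) := by
  have weighted_power (k : ℕ) {t : ℝ} (ht : t ∈ Ioc (0 : ℝ) 1) :
      betaIntegrand p q t * (t ^ (u + k) / (u + k)) = betaIntegrand (p + u + k) q t / (u + k) := by
    rw [← mul_div_assoc, betaIntegrand_mul_rpow _ ht.1, add_assoc]
  have integral_weighted_power (k : ℕ) :
      ∫ t in Ioc 0 1, betaIntegrand p q t * (t ^ (u + k) / (u + k)) =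
        beta (p + u + k) q / (u + k) := by
    rw [setIntegral_congr_fun measurableSet_Ioc fun t => weighted_power k, integral_div,
      ← incompleteBeta_one (by positivity) hq, incompleteBeta,
      intervalIntegral.integral_of_le zero_le_one]
  simp only [← integral_weighted_power, intervalIntegral.integral_of_le zero_le_one]
  refine hasSum_mul_integral_of_eventually_nonneg_or_nonpos
    (eventually_poch_div_factorial_nonneg_or_nonpos (1 - v)) (fun k => ?_) (fun k => ?_)
    (intervalIntegrable_betaIntegrand_mul_incompleteBeta hu hv hp hq).1 ?_
  · refine IntegrableOn.congr_fun ?_ (fun t ht => (weighted_power k ht).symm) measurableSet_Ioc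
    exact (intervalIntegrable_betaIntegrand (by positivity) hq).1.div_const _
  · filter_upwards [ae_restrict_mem measurableSet_Ioc] with t ht
    have huk : 0 < u + k := by positivity
    exact mul_nonneg (betaIntegrand_nonneg (Ioc_subset_Icc_self ht))
      (div_nonneg (rpow_nonneg ht.1.le _) huk.le)
  · filter_upwards [ae_restrict_mem measurableSet_Ioc] with t ht
    refine ((hasSum_incompleteBeta hu hv (Ioc_subset_Icc_self ht)).mul_left
      (betaIntegrand p q t)).congr_fun fun k => mul_left_comm _ _ _

end IncompleteBeta

section Hypergeometric

variable {a b c d : ℝ}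

lemma hyp3F2_rotate (a₁ a₂ a₃ b₁ b₂ z : ℝ) :
    hyp3F2 a₁ a₂ a₃ b₁ b₂ z = hyp3F2 a₂ a₃ a₁ b₁ b₂ z := by
  simp only [hyp3F2, mul_rotate (poch a₁ _)]

lemma hyp3F2_eq_integral (ha : 0 < a) (hab : a < b) (hc : c < 1) (hbd : b < d) :
    hyp3F2 a b c (a + 1) d 1 = a / beta b (d - b) *
      ∫ t in 0..1, betaIntegrand (b - a) (d - b) t * incompleteBeta a (1 - c) t := by
  have hb : 0 < b := ha.trans hab
  have hd : 0 < d := hb.trans hbd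
  have h := (hasSum_integral_betaIntegrand_mul_incompleteBeta ha (sub_pos.2 hc) (sub_pos.2 hab)
    (sub_pos.2 hbd)).mul_left (a / beta b (d - b))
  rw [← h.tsum_eq, hyp3F2]
  refine tsum_congr fun k => ?_
  have hak : 0 < a + k := by positivity
  have poch_ratio : poch a k / poch (a + 1) k = a / (a + k) := by
    rw [div_eq_div_iff (poch_pos (by positivity) k).ne' hak.ne', poch_mul_add_natCast]
  have ne_neg {x : ℝ} (hx : 0 < x) (m : ℕ) : x ≠ -m := by
    linarith [m.cast_nonneg (α := ℝ)]
  have beta_ratio : poch b k / poch d k = beta (b + k) (d - b) / beta b (d - b) := by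
    rw [beta_add_natCast (ne_neg hb) (ne_neg (by simpa)), add_sub_cancel,
      mul_div_cancel_right₀ _ (beta_pos hb (sub_pos.2 hbd)).ne']
  calc poch a k * poch b k * poch c k / (poch (a + 1) k * poch d k) * 1 ^ k / k !
      = (poch a k / poch (a + 1) k) * (poch b k / poch d k) * (poch c k / k !) := by
        rw [one_pow, mul_one, div_mul_div_comm, div_mul_div_comm, div_div]
    _ = _ := by
        rw [poch_ratio, beta_ratio, sub_sub_cancel, sub_add_cancel]
        ring

lemma hyp3F2_eq_beta_sub (ha : 0 < a) (hab : a < b) (hc : c < 1) (hbd : b < d) :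
    hyp3F2 a b c (a + 1) d 1 = a * beta (b - a) (d - b) * beta a (1 - c) / beta b (d - b) -
      a * beta b (1 - c) / ((b - a) * beta b (d - b)) *
        hyp3F2 b (b - d + 1) (b - a) (b - a + 1) (b - c + 1) 1 := by
  have hb : 0 < b := ha.trans hab
  have h_left := hyp3F2_eq_integral ha hab hc hbd
  have h_right := hyp3F2_eq_integral (c := b - d + 1) (d := b - c + 1) (sub_pos.2 hab)
    (sub_lt_self b ha) (by linarith) (by linarith)
  have by_parts := integral_betaIntegrand_mul_incompleteBeta_add ha (sub_pos.2 hc) (sub_pos.2 hab)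
    (sub_pos.2 hbd)
  rw [hyp3F2_rotate, sub_sub_cancel, show b - c + 1 - b = 1 - c by ring,
    show 1 - (b - d + 1) = d - b by ring] at h_right
  rw [h_left, h_right, eq_sub_of_add_eq by_parts]
  have hba : b - a ≠ 0 := (sub_pos.2 hab).ne'
  have hbc : beta b (1 - c) ≠ 0 := (beta_pos hb (sub_pos.2 hc)).ne'
  field_simp

end Hypergeometric

theorem hyp3F2_transformation (a b c d : ℝ) (ha : 0 < a) (hab : a < b) (hc : c < 1)
    (hdb : b < d) (hconv : 1 + d - b - c > 0) :
    hyp3F2 a b c (a + 1) d 1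
    = Real.Gamma (1 - c) * Real.Gamma d * Real.Gamma (a + 1) * Real.Gamma (b - a) /
        (Real.Gamma b * Real.Gamma (d - a) * Real.Gamma (a - c + 1))
      - a * Real.Gamma (1 - c) * Real.Gamma d /
          (Real.Gamma (b - c + 1) * Real.Gamma (d - b) * (b - a)) *
          hyp3F2 b (b - d + 1) (b - a) (b - a + 1) (b - c + 1) 1 := by
  have hb : Gamma b ≠ 0 := (Gamma_pos_of_pos (ha.trans hab)).ne'
  have hdb' : Gamma (d - b) ≠ 0 := (Gamma_pos_of_pos (sub_pos.2 hdb)).ne'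
  rw [hyp3F2_eq_beta_sub ha hab hc hdb, Gamma_add_one ha.ne']
  simp only [beta, sub_add_sub_cancel', add_sub_cancel, show b + (1 - c) = b - c + 1 by ring,
    show a + (1 - c) = a - c + 1 by ring]
  congr 1 <;> field_simp
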